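/- arXiv:1806.10976 — 5 statements merged into one kernel-verified Lean document; each statement's English description precedes it below -/
import Mathlib

section
/- Let R ≥ 1 and for each i = 1,…,R let Ψ_i be a complex L_i × K_i matrix. Define the R-fold Kronecker product Ψ = Ψ_1 ⊗ ⋯ ⊗ Ψ_R as the matrix indexed by rows (j_1,…,j_R) ∈ ∏_i {1,…,L_i} and columns (k_1,…,k_R) ∈ ∏_i {1,…,K_i} with entry ∏_{i=1}^R (Ψ_i)_{j_i,k_i}. Then the frame potential factorizes: FP(Ψ_1 ⊗ ⋯ ⊗ Ψ_R) = ∏_{i=1}^R FP(Ψ_i). -/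
open Matrix
open scoped BigOperators

/-- The frame potential of a complex matrix `Ψ`:
`FP(Ψ) = ‖ΨᴴΨ‖_F² = tr((ΨᴴΨ)ᴴ(ΨᴴΨ))`. -/
noncomputable def framePotential {m n : Type*} [Fintype m] [Fintype n]
    (Ψ : Matrix m n ℂ) : ℝ :=
  ∑ k, ∑ l, ‖(Ψᴴ * Ψ) k l‖ ^ 2

/-- The frame potential of an `R`-fold Kronecker product factorizes as the
product of the frame potentials of its factors. -/
theorem framePotential_kronecker (R : ℕ) (hR : 1 ≤ R) (L K : Fin R → ℕ)
    (Ψ : ∀ i : Fin R, Matrix (Fin (L i)) (Fin (K i)) ℂ) :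
    framePotential
      (Matrix.of fun (j : ∀ i, Fin (L i)) (k : ∀ i, Fin (K i)) =>
        ∏ i, Ψ i (j i) (k i)) = ∏ i, framePotential (Ψ i) := by
  have h : ∀ k l : (∀ i, Fin (K i)),
      ((Matrix.of fun (j : ∀ i, Fin (L i)) (k : ∀ i, Fin (K i)) =>
        ∏ i, Ψ i (j i) (k i))ᴴ * (Matrix.of fun (j : ∀ i, Fin (L i)) (k : ∀ i, Fin (K i)) =>
        ∏ i, Ψ i (j i) (k i))) k l = ∏ i, ((Ψ i)ᴴ * Ψ i) (k i) (l i) := by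
    intro k l
    simp only [Matrix.mul_apply, Matrix.conjTranspose_apply, Matrix.of_apply, star_prod]
    rw [Fintype.prod_sum]
    simp only [Finset.prod_mul_distrib]
  unfold framePotential
  rw [Fintype.prod_sum]
  refine Finset.sum_congr rfl fun k _ => ?_
  rw [Fintype.prod_sum]
  refine Finset.sum_congr rfl fun l _ => ?_
  rw [h, norm_prod, Finset.prod_pow]
end

section
/- Let U ∈ ℂ^{N×K} with rows u_1,…,u_N, and for a subset L ⊆ {1,…,N} define the frame potential set function F(L) = ∑_{j∈L} ∑_{l∈L} |⟨u_j, u_l⟩|². Then F is normalized (F(∅) = 0), monotone non-decreasing (F(X) ≤ F(X ∪ {x}) for all X ⊆ {1,…,N} and x), and supermodular, i.e., F(X ∪ {x}) − F(X) ≤ F(X ∪ {x,y}) − F(X ∪ {y}) for all X ⊆ {1,…,N} and distinct x, y ∉ X. -/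
open scoped BigOperators

/-- The frame potential set function of the rows of `U` indexed by `L`:
`F(L) = ∑_{j∈L} ∑_{l∈L} |⟨u_j, u_l⟩|²`. -/
noncomputable def frameSetFun {N K : ℕ} (U : Matrix (Fin N) (Fin K) ℂ)
    (L : Finset (Fin N)) : ℝ :=
  ∑ j ∈ L, ∑ l ∈ L, ‖∑ k, star (U j k) * U l k‖ ^ 2

/-- The frame potential set function is normalized, monotone non-decreasing,
and supermodular. -/
theorem frameSetFun_normalized_monotone_supermodular (N K : ℕ)
    (U : Matrix (Fin N) (Fin K) ℂ) :
    frameSetFun U ∅ = 0 ∧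
    (∀ (X : Finset (Fin N)) (x : Fin N),
      frameSetFun U X ≤ frameSetFun U (insert x X)) ∧
    (∀ (X : Finset (Fin N)) (x y : Fin N), x ∉ X → y ∉ X → x ≠ y →
      frameSetFun U (insert x X) - frameSetFun U X ≤
        frameSetFun U (insert y (insert x X)) - frameSetFun U (insert y X)) := by
  have step : ∀ (X : Finset (Fin N)) (x : Fin N), x ∉ X →
      frameSetFun U (insert x X) = frameSetFun U X
        + ∑ l ∈ X, ‖∑ k, star (U x k) * U l k‖ ^ 2
        + ∑ j ∈ X, ‖∑ k, star (U j k) * U x k‖ ^ 2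
        + ‖∑ k, star (U x k) * U x k‖ ^ 2 := by
    intro X x hx
    unfold frameSetFun
    simp only [Finset.sum_insert hx, Finset.sum_add_distrib]
    ring
  refine ⟨by simp [frameSetFun], ?_, ?_⟩
  · intro X x
    by_cases hx : x ∈ X
    · rw [Finset.insert_eq_of_mem hx]
    · rw [step X x hx]
      have h1 : 0 ≤ ∑ l ∈ X, ‖∑ k, star (U x k) * U l k‖ ^ 2 :=
        Finset.sum_nonneg fun _ _ => sq_nonneg _
      have h2 : 0 ≤ ∑ j ∈ X, ‖∑ k, star (U j k) * U x k‖ ^ 2 :=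
        Finset.sum_nonneg fun _ _ => sq_nonneg _
      have h3 := sq_nonneg ‖∑ k, star (U x k) * U x k‖
      linarith
  · intro X x y hx hy hxy
    have hy' : y ∉ insert x X := by
      simp [hy, hxy.symm]
    rw [step _ y hy', step X y hy, Finset.sum_insert hx, Finset.sum_insert hx]
    have h1 := sq_nonneg ‖∑ k, star (U x k) * U y k‖
    have h2 := sq_nonneg ‖∑ k, star (U y k) * U x k‖
    linarith
end

section
/- Let R ≥ 1 and for each i = 1,…,R let U_i ∈ ℂ^{N_i×K} (all with K columns). For A ⊆ {1,…,N_i} let T_i(A) = ∑_{j∈A} u_{i,j}^H u_{i,j} be the K × K Grammian of the rows of U_i indexed by A. Let 𝒩 be the disjoint union of the sets 𝒩_i = {1,…,N_i}, and for S ⊆ 𝒩 write S_i = S ∩ 𝒩_i. Define Q(S) = ‖T_1(𝒩_1) ∘ ⋯ ∘ T_R(𝒩_R)‖_F² − ‖T_1(𝒩_1∖S_1) ∘ ⋯ ∘ T_R(𝒩_R∖S_R)‖_F². Then Q is normalized (Q(∅) = 0) and monotone non-decreasing: Q(S) ≤ Q(S ∪ {x}) for every S ⊆ 𝒩 and x ∈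 𝒩 ∖ S. -/
open scoped BigOperators

/-- The `K × K` Grammian of the rows of `U` indexed by `A`:
`T(A) = ∑_{j∈A} u_jᴴ u_j`. -/
noncomputable def gram {n K : ℕ} (U : Matrix (Fin n) (Fin K) ℂ)
    (A : Finset (Fin n)) : Matrix (Fin K) (Fin K) ℂ :=
  Matrix.of fun a b => ∑ j ∈ A, star (U j a) * U j b

/-- `Q(S) = ‖T_1(𝒩_1) ∘ ⋯ ∘ T_R(𝒩_R)‖_F² − ‖T_1(𝒩_1∖S_1) ∘ ⋯ ∘ T_R(𝒩_R∖S_R)‖_F²`,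
where the ground set `𝒩` is the disjoint union of the per-domain index sets
`𝒩_i` (modeled by a sigma type) and `S_i` is the part of `S` in domain `i`. -/
noncomputable def Q {R : ℕ} {N : Fin R → ℕ} {K : ℕ}
    (U : ∀ i, Matrix (Fin (N i)) (Fin K) ℂ)
    (S : Finset (Σ i : Fin R, Fin (N i))) : ℝ :=
  (∑ a, ∑ b, ‖∏ i, gram (U i) Finset.univ a b‖ ^ 2) -
    ∑ a, ∑ b, ‖∏ i, gram (U i)
      (Finset.univ.filter fun j : Fin (N i) => (⟨i, j⟩ : Σ i, Fin (N i)) ∉ S) a b‖ ^ 2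

/-- Double counting identity for a Grammian-type sum. -/
theorem gram_swap {ι : Type*} {K : ℕ} (F : Finset ι) (w : ι → Fin K → ℂ) :
    ∑ a, ∑ b, ‖∑ f ∈ F, star (w f a) * w f b‖ ^ 2 =
      ∑ f ∈ F, ∑ g ∈ F, ‖∑ a, star (w f a) * w g a‖ ^ 2 := by
  have h : ((∑ a, ∑ b, ‖∑ f ∈ F, star (w f a) * w f b‖ ^ 2 : ℝ) : ℂ) =
      ((∑ f ∈ F, ∑ g ∈ F, ‖∑ a, star (w f a) * w g a‖ ^ 2 : ℝ) : ℂ) := by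
    push_cast
    simp_rw [← Complex.mul_conj', map_sum, Finset.sum_mul_sum]
    have e1 : ∀ a : Fin K, ∑ b : Fin K, ∑ f ∈ F, ∑ g ∈ F,
        star (w f a) * w f b * (starRingEnd ℂ) (star (w g a) * w g b) =
        ∑ f ∈ F, ∑ g ∈ F, ∑ b : Fin K,
        star (w f a) * w f b * (starRingEnd ℂ) (star (w g a) * w g b) := by
      intro a
      rw [Finset.sum_comm]
      exact Finset.sum_congr rfl fun f _ => Finset.sum_comm
    rw [Finset.sum_congr rfl fun a _ => e1 a, Finset.sum_comm]
    refine Finset.sum_congr rfl fun f _ => ?_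
    rw [Finset.sum_comm]
    refine Finset.sum_congr rfl fun g _ => Finset.sum_congr rfl fun a _ =>
      Finset.sum_congr rfl fun b _ => ?_
    simp only [map_mul, Complex.star_def, Complex.conj_conj]
    ring
  exact_mod_cast h

theorem hadamard_gram_expand {R : ℕ} {N : Fin R → ℕ} {K : ℕ}
    (U : ∀ i, Matrix (Fin (N i)) (Fin K) ℂ) (A : ∀ i, Finset (Fin (N i))) (a b : Fin K) :
    ∏ i, gram (U i) (A i) a b =
      ∑ f ∈ Fintype.piFinset A, star (∏ i, U i (f i) a) * ∏ i, U i (f i) b := by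
  simp only [gram, Matrix.of_apply, Finset.prod_univ_sum, Finset.prod_mul_distrib, star_prod]

theorem hadamard_gram_mono {R : ℕ} {N : Fin R → ℕ} {K : ℕ}
    (U : ∀ i, Matrix (Fin (N i)) (Fin K) ℂ) (A B : ∀ i, Finset (Fin (N i)))
    (h : ∀ i, A i ⊆ B i) :
    ∑ a, ∑ b, ‖∏ i, gram (U i) (A i) a b‖ ^ 2 ≤ ∑ a, ∑ b, ‖∏ i, gram (U i) (B i) a b‖ ^ 2 := by
  simp_rw [hadamard_gram_expand]
  rw [gram_swap _ (fun (f : ∀ i, Fin (N i)) a => ∏ i, U i (f i) a),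
    gram_swap _ (fun (f : ∀ i, Fin (N i)) a => ∏ i, U i (f i) a)]
  have hs := Fintype.piFinset_subset A B h
  calc _ ≤ ∑ f ∈ Fintype.piFinset A, ∑ g ∈ Fintype.piFinset B,
        ‖∑ a, star (∏ i, U i (f i) a) * ∏ i, U i (g i) a‖ ^ 2 :=
        Finset.sum_le_sum fun f _ =>
          Finset.sum_le_sum_of_subset_of_nonneg hs fun _ _ _ => by positivity
    _ ≤ _ := Finset.sum_le_sum_of_subset_of_nonneg hs fun _ _ _ => by positivity

/-- `Q` is normalized and monotone non-decreasing. -/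
theorem Q_normalized_monotone (R : ℕ) (hR : 1 ≤ R) (N : Fin R → ℕ) (K : ℕ)
    (U : ∀ i, Matrix (Fin (N i)) (Fin K) ℂ) :
    Q U ∅ = 0 ∧
    (∀ (S : Finset (Σ i : Fin R, Fin (N i))) (x : Σ i : Fin R, Fin (N i)),
      x ∉ S → Q U S ≤ Q U (insert x S)) := by
  refine ⟨by simp [Q], fun S x _ => ?_⟩
  unfold Q
  refine sub_le_sub_left (hadamard_gram_mono U _ _ fun i j hj => ?_) _
  simp only [Finset.mem_filter, Finset.mem_univ, true_and, Finset.mem_insert, not_or] at hj ⊢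
  exact hj.2
end

section
/- Let R ≥ 1 and for each i = 1,…,R let U_i ∈ ℂ^{N_i×K} (all with K columns). For A ⊆ {1,…,N_i} let T_i(A) = ∑_{j∈A} u_{i,j}^H u_{i,j} be the K × K Grammian of the rows of U_i indexed by A. Let 𝒩 be the disjoint union of the sets 𝒩_i = {1,…,N_i}, and for S ⊆ 𝒩 write S_i = S ∩ 𝒩_i. Define Q(S) = ‖T_1(𝒩_1) ∘ ⋯ ∘ T_R(𝒩_R)‖_F² − ‖T_1(𝒩_1∖S_1) ∘ ⋯ ∘ T_R(𝒩_R∖S_R)‖_F². Then Q is submodular: for every S ⊆ 𝒩 and distinct x, y ∈ 𝒩 ∖ S, Q(S ∪ {x}) − Q(S) ≥ Q(S ∪ {x,y}) − Q(S ∪ {y}). -/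
open scoped BigOperators

lemma frob_swap {ι : Type*} {K : ℕ} (s : Finset ι) (v : ι → Fin K → ℂ) :
    ∑ a, ∑ b, ‖∑ f ∈ s, star (v f a) * v f b‖ ^ 2 =
      ∑ f ∈ s, ∑ g ∈ s, ‖∑ a, star (v f a) * v g a‖ ^ 2 := by
  have h : ((∑ a, ∑ b, ‖∑ f ∈ s, star (v f a) * v f b‖ ^ 2 : ℝ) : ℂ) =
      ((∑ f ∈ s, ∑ g ∈ s, ‖∑ a, star (v f a) * v g a‖ ^ 2 : ℝ) : ℂ) := by
    push_cast
    simp only [← Complex.mul_conj', map_sum, Finset.sum_mul_sum]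
    have e1 : ∀ a : Fin K, (∑ b : Fin K, ∑ f ∈ s, ∑ g ∈ s,
        star (v f a) * v f b * (starRingEnd ℂ) (star (v g a) * v g b)) =
        ∑ f ∈ s, ∑ g ∈ s, ∑ b : Fin K,
        star (v f a) * v f b * (starRingEnd ℂ) (star (v g a) * v g b) := by
      intro a
      rw [Finset.sum_comm]
      exact Finset.sum_congr rfl fun f _ => Finset.sum_comm
    simp only [e1]
    rw [Finset.sum_comm]
    refine Finset.sum_congr rfl fun f _ => ?_
    rw [Finset.sum_comm]
    refine Finset.sum_congr rfl fun g _ => ?_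
    refine Finset.sum_congr rfl fun a _ => ?_
    refine Finset.sum_congr rfl fun b _ => ?_
    simp only [map_mul, Complex.star_def, Complex.conj_conj]
    ring
  exact_mod_cast h

open Classical in
lemma frob_eq {R : ℕ} {N : Fin R → ℕ} {K : ℕ}
    (U : ∀ i, Matrix (Fin (N i)) (Fin K) ℂ)
    (S : Finset (Σ i : Fin R, Fin (N i))) :
    ∑ a, ∑ b, ‖∏ i, gram (U i)
      (Finset.univ.filter fun j : Fin (N i) => (⟨i, j⟩ : Σ i, Fin (N i)) ∉ S) a b‖ ^ 2 =
    ∑ f : (∀ i, Fin (N i)), ∑ g : (∀ i, Fin (N i)),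
      if (∀ i, (⟨i, f i⟩ : Σ i, Fin (N i)) ∉ S) ∧ (∀ i, (⟨i, g i⟩ : Σ i, Fin (N i)) ∉ S) then
        ‖∑ a, star (∏ i, U i (f i) a) * ∏ i, U i (g i) a‖ ^ 2 else 0 := by
  have h := frob_swap (Finset.univ.filter fun f : (∀ i, Fin (N i)) =>
    ∀ i, (⟨i, f i⟩ : Σ i, Fin (N i)) ∉ S) (fun f a => ∏ i, U i (f i) a)
  have e : (Finset.univ.filter fun f : (∀ i, Fin (N i)) =>
    ∀ i, (⟨i, f i⟩ : Σ i, Fin (N i)) ∉ S) = Fintype.piFinset fun i =>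
      (Finset.univ.filter fun j : Fin (N i) => (⟨i, j⟩ : Σ i, Fin (N i)) ∉ S) := by
    ext f; simp
  calc _ = _ := ?_
    _ = _ := h
    _ = _ := ?_
  · refine Finset.sum_congr rfl fun a _ => Finset.sum_congr rfl fun b _ => ?_
    simp only [gram, Matrix.of_apply]
    rw [Finset.prod_univ_sum, e]
    simp only [Finset.prod_mul_distrib, star_prod]
  · rw [Finset.sum_filter]
    refine Finset.sum_congr rfl fun f _ => ?_
    rw [Finset.sum_filter]
    by_cases hf : ∀ i, (⟨i, f i⟩ : Σ i, Fin (N i)) ∉ S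
    · simp only [hf, true_and, implies_true, not_false_eq_true, if_true]
    · simp only [hf, false_and, if_false, Finset.sum_const_zero]

lemma ite_key (a b c : Prop) (w : ℝ) (hw : 0 ≤ w) [Decidable a] [Decidable (b ∧ a)]
    [Decidable (c ∧ b ∧ a)] [Decidable (c ∧ a)] :
    0 ≤ (if a then w else 0) - (if b ∧ a then w else 0) + (if c ∧ b ∧ a then w else 0)
      - (if c ∧ a then w else 0) := by
  by_cases a <;> by_cases b <;> by_cases c <;> simp [*]

/-- `Q` is submodular. -/
theorem Q_submodular (R : ℕ) (hR : 1 ≤ R) (N : Fin R → ℕ) (K : ℕ)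
    (U : ∀ i, Matrix (Fin (N i)) (Fin K) ℂ) :
    ∀ (S : Finset (Σ i : Fin R, Fin (N i))) (x y : Σ i : Fin R, Fin (N i)),
      x ∉ S → y ∉ S → x ≠ y →
      Q U (insert x S) - Q U S ≥
        Q U (insert y (insert x S)) - Q U (insert y S) := by
  classical
  intro S x y _ _ _
  simp only [Q, frob_eq]
  rw [ge_iff_le, ← sub_nonneg]
  have key : ∀ f g : (∀ i, Fin (N i)), ∀ w : ℝ, 0 ≤ w →
      let c : Finset (Σ i : Fin R, Fin (N i)) → ℝ := fun S =>
        if (∀ i, (⟨i, f i⟩ : Σ i, Fin (N i)) ∉ S) ∧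
          (∀ i, (⟨i, g i⟩ : Σ i, Fin (N i)) ∉ S) then w else 0
      0 ≤ c S - c (insert x S) + c (insert y (insert x S)) - c (insert y S) := by
    intro f g w hw
    have mono : ∀ z : (Σ i : Fin R, Fin (N i)), ∀ T : Finset (Σ i : Fin R, Fin (N i)),
        ((∀ i, (⟨i, f i⟩ : Σ i, Fin (N i)) ∉ insert z T) ∧
          (∀ i, (⟨i, g i⟩ : Σ i, Fin (N i)) ∉ insert z T)) ↔
        (((∀ i, (⟨i, f i⟩ : Σ i, Fin (N i)) ≠ z) ∧
          (∀ i, (⟨i, g i⟩ : Σ i, Fin (N i)) ≠ z)) ∧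
        ((∀ i, (⟨i, f i⟩ : Σ i, Fin (N i)) ∉ T) ∧
          (∀ i, (⟨i, g i⟩ : Σ i, Fin (N i)) ∉ T))) := by
      intro z T
      simp only [Finset.mem_insert, not_or, forall_and, ne_eq]
      tauto
    simp only [mono]
    exact ite_key _ _ _ w hw
  have := Finset.sum_nonneg fun f (_ : f ∈ Finset.univ) =>
    Finset.sum_nonneg fun g (_ : g ∈ Finset.univ) =>
      key f g (‖∑ a, star (∏ i, U i (f i) a) * ∏ i, U i (g i) a‖ ^ 2) (by positivity)
  simp only [Finset.sum_add_distrib, Finset.sum_sub_distrib] at this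
  linarith
end

section
/- Let R ≥ 1, and for each i = 1,…,R let U_i ∈ ℂ^{N_i×K} (all with K columns), T_i(A) the K × K Grammian of the rows of U_i indexed by A ⊆ {1,…,N_i}, and P(L) = ‖T_1(L_1) ∘ ⋯ ∘ T_R(L_R)‖_F² for a tuple of selections L = (L_1,…,L_R). Let u_m for m ∈ ∏_i {1,…,N_i} denote the rows of the R-fold Khatri-Rao product U_1 ⊙ ⋯ ⊙ U_R, and let L_min = min_m ‖u_m‖₂², assumed strictly positive. Suppose L^g = (L_1^g,…,L_R^g) and L^⋆ = (L_1^⋆,…,L_R^⋆) are two tuples of selections with every L_i^g and every L_i^⋆ nonempty, satisfying the guarantee P(𝒩) − P(L^g) ≥ (1/2)(P(𝒩) − P(L^⋆)), where P(𝒩) = ‖T_1({1,…,N_1}) ∘ ⋯ ∘ T_R({1,…,N_R})‖_F². Then P(L^g) ≤ γ P(L^⋆) with γ = (1/2)((K/L_min²) P(𝒩) + 1). -/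
open scoped BigOperators

/-- `P(L) = ‖T_1(L_1) ∘ ⋯ ∘ T_R(L_R)‖_F²` for a tuple of selections `L`. -/
noncomputable def P {R : ℕ} {N : Fin R → ℕ} {K : ℕ}
    (U : ∀ i, Matrix (Fin (N i)) (Fin K) ℂ)
    (L : ∀ i, Finset (Fin (N i))) : ℝ :=
  ∑ a, ∑ b, ‖(∏ i, gram (U i) (L i) a b)‖ ^ 2

/-- Near-optimality with respect to the frame potential (diagonal core case):
if the tuples of nonempty selections `L^g` and `L^⋆` satisfy the near-optimality
guarantee `P(𝒩) − P(L^g) ≥ (1/2)(P(𝒩) − P(L^⋆))`, then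
`P(L^g) ≤ γ P(L^⋆)` with `γ = (1/2)((K/L_min²) P(𝒩) + 1)`, where `L_min` is the
minimum squared row norm of the Khatri-Rao product `U_1 ⊙ ⋯ ⊙ U_R`. -/
theorem frame_potential_near_optimality_diagonal (R : ℕ) (hR : 1 ≤ R)
    (N : Fin R → ℕ) (K : ℕ)
    (U : ∀ i, Matrix (Fin (N i)) (Fin K) ℂ)
    (Lg Lstar : ∀ i, Finset (Fin (N i)))
    (hg : ∀ i, (Lg i).Nonempty) (hstar : ∀ i, (Lstar i).Nonempty)
    (Lmin : ℝ) (hpos : 0 < Lmin)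
    (hLmin : IsLeast {x : ℝ | ∃ m : ∀ i, Fin (N i),
      x = ∑ k : Fin K, ‖(∏ i, U i (m i) k)‖ ^ 2} Lmin)
    (hguarantee :
      P U (fun _ => Finset.univ) - P U Lg ≥
        (1 / 2) * (P U (fun _ => Finset.univ) - P U Lstar)) :
    P U Lg ≤
      (1 / 2) * (((K : ℝ) / Lmin ^ 2) * P U (fun _ => Finset.univ) + 1) *
        P U Lstar := by
  have hPN : 0 ≤ P U (fun _ => Finset.univ) := by
    unfold P
    positivity
  choose m hm using hstar
  have h1 : Lmin ≤ ∑ k : Fin K, ‖(∏ i, U i (m i) k)‖ ^ 2 := hLmin.2 ⟨m, rfl⟩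
  have hdiag : ∀ (i : Fin R) (a : Fin K),
      ‖U i (m i) a‖ ^ 2 ≤ ‖gram (U i) (Lstar i) a a‖ := by
    intro i a
    have e : gram (U i) (Lstar i) a a
        = ((∑ j ∈ Lstar i, ‖U i j a‖ ^ 2 : ℝ) : ℂ) := by
      simp only [gram, Matrix.of_apply]
      push_cast
      refine Finset.sum_congr rfl fun j _ => ?_
      exact Complex.conj_mul' (U i j a)
    rw [e, Complex.norm_real, Real.norm_eq_abs]
    refine le_trans ?_ (le_abs_self _)
    exact Finset.single_le_sum (f := fun j => ‖U i j a‖ ^ 2)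
      (fun j _ => by positivity) (hm i)
  have h2 : Lmin ≤ ∑ a : Fin K, ‖∏ i, gram (U i) (Lstar i) a a‖ := by
    refine h1.trans (Finset.sum_le_sum fun a _ => ?_)
    rw [norm_prod, norm_prod, ← Finset.prod_pow]
    exact Finset.prod_le_prod (fun i _ => by positivity) (fun i _ => hdiag i a)
  have h3 : (∑ a : Fin K, ‖∏ i, gram (U i) (Lstar i) a a‖) ^ 2
      ≤ K * ∑ a : Fin K, ‖∏ i, gram (U i) (Lstar i) a a‖ ^ 2 := by
    have := sq_sum_le_card_mul_sum_sq (s := (Finset.univ : Finset (Fin K)))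
      (f := fun a => ‖∏ i, gram (U i) (Lstar i) a a‖)
    simpa using this
  have h4 : ∑ a : Fin K, ‖∏ i, gram (U i) (Lstar i) a a‖ ^ 2 ≤ P U Lstar := by
    unfold P
    refine Finset.sum_le_sum fun a _ => ?_
    exact Finset.single_le_sum (f := fun b => ‖∏ i, gram (U i) (Lstar i) a b‖ ^ 2)
      (fun b _ => by positivity) (Finset.mem_univ a)
  have h5 : Lmin ^ 2 ≤ K * P U Lstar :=
    (pow_le_pow_left₀ hpos.le h2 2).trans
      (h3.trans (mul_le_mul_of_nonneg_left h4 (Nat.cast_nonneg K)))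
  have h6 : 1 ≤ (K : ℝ) / Lmin ^ 2 * P U Lstar := by
    rw [div_mul_eq_mul_div, le_div_iff₀ (by positivity)]
    linarith
  have h7 := mul_le_mul_of_nonneg_left h6 hPN
  linarith
end
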